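/- Let c > 0 be a real number, let n be a positive integer with n > 2c/π + √42, and let ψ be the n-th PSWF with band limit c, with ODE eigenvalue χ_n. Then χ_n > c² + 42, and moreover k₀ > 2, where k₀ is the largest integer k ≥ 1 with 2k·(2k+1) < χ_n − c². -/

import Mathlib

open Real

/-- `IsPSWF c n ψ χ lam` : `ψ` is the `n`-th prolate spheroidal wave function with
band limit `c`, ODE eigenvalue `χ` and integral eigenvalue `lam`. -/
def IsPSWF (c : ℝ) (n : ℕ) (ψ : ℝ → ℝ) (χ : ℝ) (lam : ℂ) : Prop :=
  ContinuousOn ψ (Set.Icc (-1) 1) ∧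
  (∀ x ∈ Set.Ioo (-1 : ℝ) 1, DifferentiableAt ℝ ψ x ∧ DifferentiableAt ℝ (deriv ψ) x) ∧
  (∀ x ∈ Set.Ioo (-1 : ℝ) 1,
    (1 - x ^ 2) * deriv (deriv ψ) x - 2 * x * deriv ψ x + (χ - c ^ 2 * x ^ 2) * ψ x = 0) ∧
  {x | x ∈ Set.Ioo (-1 : ℝ) 1 ∧ ψ x = 0}.Finite ∧
  {x | x ∈ Set.Ioo (-1 : ℝ) 1 ∧ ψ x = 0}.ncard = n ∧
  (∫ t in (-1 : ℝ)..1, (ψ t) ^ 2) = 1 ∧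
  ∀ x ∈ Set.Icc (-1 : ℝ) 1,
    lam * (ψ x : ℂ) =
      ∫ t in (-1 : ℝ)..1, (ψ t : ℂ) * Complex.exp (Complex.I * (c : ℂ) * (x : ℂ) * (t : ℂ))

/-!
If `χ ≤ c² + D`, then `χ - c² x²` is at most `Q = c² (1 - x²) + D`. In the phase variable
`ds = √(Q / (1 - x²)) dx`, the flux `w = (1 - x²) ψ'`, divided by `√G` for `G = √((1 - x²) Q)`,
satisfies (for `χ = c² + D`) `v'' + (1 - r) v = 0` with `r ≥ 0`. Since `w` tends to `0` at `±1`,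
Sturm comparison puts each zero of `ψ` in an interval of phase length at least `π` on which `w`
does not vanish, and by Rolle these intervals are disjoint. The total phase is at most
`∫ (c + √D / √(1 - x²)) dx = 2 c + √D π`, hence `n ≤ 2 c / π + √D`.
The comparison is run on the Riccati variable `v' / v`, whose arctangent decreases no faster than
the phase grows; this also covers `χ < c² + D` and the singular endpoints.
-/

open Set Filter Topology

/-- `ψ` solves the Sturm–Liouville equation `(p ψ')' + q ψ = 0` on `(a, b)`, written as a
first-order system for `ψ` and its flux `w = p ψ'`, and is continuous up to the endpoints, where
`p` may vanish. -/
structure IsSturmLiouvilleSol (p q : ℝ → ℝ) (a b : ℝ) (ψ w : ℝ → ℝ) : Prop where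
  continuousOn : ContinuousOn ψ (Icc a b)
  hasDerivAt : ∀ x ∈ Ioo a b, HasDerivAt ψ (w x / p x) x
  hasDerivAt_flux : ∀ x ∈ Ioo a b, HasDerivAt w (-q x * ψ x) x

namespace IsSturmLiouvilleSol

variable {p q ψ w : ℝ → ℝ} {a b : ℝ}

lemma neg (h : IsSturmLiouvilleSol p q a b ψ w) : IsSturmLiouvilleSol p q a b (-ψ) (-w) where
  continuousOn := h.continuousOn.neg
  hasDerivAt x hx := (h.hasDerivAt x hx).neg.congr_deriv (neg_div _ _).symm
  hasDerivAt_flux x hx := (h.hasDerivAt_flux x hx).neg.congr_deriv (mul_neg _ _).symm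

lemma comp_neg (h : IsSturmLiouvilleSol p q a b ψ w) :
    IsSturmLiouvilleSol (fun x ↦ p (-x)) (fun x ↦ q (-x)) (-b) (-a)
      (fun x ↦ ψ (-x)) (fun x ↦ -w (-x)) where
  continuousOn :=
    h.continuousOn.comp continuous_neg.continuousOn fun _ hx ↦ ⟨le_neg.2 hx.2, neg_le.1 hx.1⟩
  hasDerivAt x hx :=
    ((h.hasDerivAt (-x) ⟨lt_neg.2 hx.2, neg_lt.1 hx.1⟩).comp x (hasDerivAt_neg x)).congr_deriv
      (by ring)
  hasDerivAt_flux x hx :=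
    ((h.hasDerivAt_flux (-x) ⟨lt_neg.2 hx.2, neg_lt.1 hx.1⟩).comp x
      (hasDerivAt_neg x)).neg.congr_deriv (by ring)

lemma continuousOn_flux (h : IsSturmLiouvilleSol p q a b ψ w) : ContinuousOn w (Ioo a b) :=
  fun x hx ↦ (h.hasDerivAt_flux x hx).continuousAt.continuousWithinAt

lemma strictMonoOn_of_flux_pos (h : IsSturmLiouvilleSol p q a b ψ w)
    (hp : ∀ x ∈ Ioo a b, 0 < p x) {z R : ℝ} (hz : a ≤ z) (hR : R ≤ b)
    (hw : ∀ x ∈ Ioo z R, 0 < w x) : StrictMonoOn ψ (Icc z R) := by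
  refine strictMonoOn_of_deriv_pos (convex_Icc z R)
    (h.continuousOn.mono (Icc_subset_Icc hz hR)) fun x hx ↦ ?_
  rw [interior_Icc] at hx
  have hx' : x ∈ Ioo a b := Ioo_subset_Ioo hz hR hx
  rw [(h.hasDerivAt x hx').deriv]
  exact div_pos (hw x hx) (hp x hx')

lemma exists_flux_eq_zero (h : IsSturmLiouvilleSol p q a b ψ w) (hp : ∀ x ∈ Ioo a b, p x ≠ 0)
    {y z : ℝ} (hy : a ≤ y) (hyz : y < z) (hz : z ≤ b) (hψ : ψ y = ψ z) :
    ∃ ξ ∈ Ioo y z, w ξ = 0 := by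
  have hsub : Ioo y z ⊆ Ioo a b := Ioo_subset_Ioo hy hz
  obtain ⟨ξ, hξ, hdiv⟩ := exists_hasDerivAt_eq_zero hyz
    (h.continuousOn.mono (Icc_subset_Icc hy hz)) hψ fun x hx ↦ h.hasDerivAt x (hsub hx)
  exact ⟨ξ, hξ, (div_eq_zero_iff.1 hdiv).resolve_right (hp ξ (hsub hξ))⟩

lemma eq_zero_of_initial_eq_zero (h : IsSturmLiouvilleSol p q a b ψ w)
    (hpc : ContinuousOn p (Ioo a b)) (hp : ∀ x ∈ Ioo a b, p x ≠ 0)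
    (hqc : ContinuousOn q (Ioo a b)) {z t : ℝ} (hz : a < z) (ht : t < b)
    (hψ : ψ z = 0) (hw : w z = 0) : ∀ x ∈ Icc z t, ψ x = 0 := by
  have hsub : Icc z t ⊆ Ioo a b := Icc_subset_Ioo hz ht
  obtain ⟨P, hP⟩ := isCompact_Icc.exists_bound_of_continuousOn
    ((continuousOn_const (c := (1 : ℝ))).div (hpc.mono hsub) fun x hx ↦ hp x (hsub hx))
  obtain ⟨M, hM⟩ := isCompact_Icc.exists_bound_of_continuousOn (hqc.mono hsub)
  have hderiv : ∀ x ∈ Icc z t,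
      HasDerivAt (fun y ↦ (ψ y, w y)) (w x / p x, -q x * ψ x) x := fun x hx ↦
    (h.hasDerivAt x (hsub hx)).prodMk (h.hasDerivAt_flux x (hsub hx))
  have hbound : ∀ x ∈ Ico z t, ‖(w x / p x, -q x * ψ x)‖ ≤ max P M * ‖(ψ x, w x)‖ := by
    intro x hx
    have hPx : ‖1 / p x‖ ≤ max P M := (hP x (Ico_subset_Icc_self hx)).trans (le_max_left _ _)
    have hMx : ‖-q x‖ ≤ max P M :=
      (norm_neg (q x)).le.trans ((hM x (Ico_subset_Icc_self hx)).trans (le_max_right _ _))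
    rw [Prod.norm_mk, div_eq_mul_one_div, mul_comm (w x), norm_mul, norm_mul]
    have h0 : 0 ≤ max P M := (norm_nonneg _).trans hPx
    exact max_le
      (mul_le_mul hPx (norm_snd_le (ψ x, w x)) (norm_nonneg _) h0)
      (mul_le_mul hMx (norm_fst_le (ψ x, w x)) (norm_nonneg _) h0)
  have hzero := eq_zero_of_abs_deriv_le_mul_abs_self_of_eq_zero_right
    (fun x hx ↦ (hderiv x hx).continuousAt.continuousWithinAt)
    (fun x hx ↦ (hderiv x (Ico_subset_Icc_self hx)).hasDerivWithinAt)
    (Prod.mk_eq_zero.2 ⟨hψ, hw⟩) hbound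
  exact fun x hx ↦ (Prod.mk_eq_zero.1 (hzero x hx)).1

lemma flux_ne_zero_of_finite_zeros (h : IsSturmLiouvilleSol p q a b ψ w)
    (hpc : ContinuousOn p (Ioo a b)) (hp : ∀ x ∈ Ioo a b, p x ≠ 0)
    (hqc : ContinuousOn q (Ioo a b)) (hfin : {x | x ∈ Ioo a b ∧ ψ x = 0}.Finite)
    {z : ℝ} (hz : z ∈ Ioo a b) (hψ : ψ z = 0) : w z ≠ 0 := by
  intro hw
  obtain ⟨t, hzt, htb⟩ := exists_between hz.2
  have hzero := h.eq_zero_of_initial_eq_zero hpc hp hqc hz.1 htb hψ hw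
  exact Icc_infinite hzt (hfin.subset fun x hx ↦ ⟨Icc_subset_Ioo hz.1 htb hx, hzero x hx⟩)

lemma flux_le_of_exists_lt (h : IsSturmLiouvilleSol p q a b ψ w) {A M x : ℝ} (hx : a < x)
    (hψ : ∀ y ∈ Ico x b, ψ y ∈ Icc 0 A) (hM : 0 ≤ M) (hq : ∀ y ∈ Ico x b, q y ≤ M)
    (hsmall : ∀ ε > 0, ∃ y ∈ Ico x b, w y < ε) : w x ≤ M * A * (b - x) := by
  have hderiv : ∀ y ∈ Ico x b,
      HasDerivAt (fun y ↦ w y + M * A * y) (-q y * ψ y + M * A * 1) y := fun y hy ↦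
    (h.hasDerivAt_flux y ⟨hx.trans_le hy.1, hy.2⟩).add ((hasDerivAt_id y).const_mul _)
  have hmono : MonotoneOn (fun y ↦ w y + M * A * y) (Ico x b) := by
    refine monotoneOn_of_hasDerivWithinAt_nonneg (convex_Ico x b)
      (fun y hy ↦ (hderiv y hy).continuousAt.continuousWithinAt)
      (fun y hy ↦ (hderiv y (interior_subset hy)).hasDerivWithinAt) fun y hy ↦ ?_
    have hy := interior_subset hy
    have : q y * ψ y ≤ M * A := mul_le_mul (hq y hy) (hψ y hy).2 (hψ y hy).1 hM
    linarith
  refine le_of_forall_pos_le_add fun ε hε ↦ ?_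
  obtain ⟨y, hy, hwy⟩ := hsmall ε hε
  have hxy : w x + M * A * x ≤ w y + M * A * y :=
    hmono ⟨le_rfl, hy.1.trans_lt hy.2⟩ hy hy.1
  have hA : 0 ≤ A := (hψ y hy).1.trans (hψ y hy).2
  have hyb : M * A * y ≤ M * A * b := mul_le_mul_of_nonneg_left hy.2.le (mul_nonneg hM hA)
  linarith

end IsSturmLiouvilleSol

/-- The Riccati variable `B - G ψ / w` of a Sturm–Liouville solution `ψ` with flux `w`. With
`G = √(p Q)`, `B = -G' / (2 Q)` and the phase `ds = √(Q / p) dx`, it is the logarithmic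
derivative in `s` of `w / √G` when `q = Q`. -/
noncomputable def riccatiVar (B G ψ w : ℝ → ℝ) (x : ℝ) : ℝ := B x - G x * ψ x / w x

/-- With `K` the Riccati variable, `K' + (1 + K²) Q / G` is the sum of `B' + (Q / G) B²` and
`(Q - q) G (ψ / w)²`: the choice of `B` makes the terms linear in `ψ / w` cancel. -/
lemma IsSturmLiouvilleSol.riccatiVar_deriv_ge {p q ψ w : ℝ → ℝ} {a b : ℝ}
    (h : IsSturmLiouvilleSol p q a b ψ w) {x : ℝ} (hx : x ∈ Ioo a b) (hw : w x ≠ 0)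
    {B G : ℝ → ℝ} {B' Q : ℝ} (hG : HasDerivAt G (-2 * Q * B x) x) (hB : HasDerivAt B B' x)
    (hGpos : 0 < G x) (hGsq : G x ^ 2 = p x * Q) (hB' : 0 ≤ B' + Q / G x * B x ^ 2)
    (hq : q x ≤ Q) :
    DifferentiableAt ℝ (riccatiVar B G ψ w) x ∧
      -(1 + riccatiVar B G ψ w x ^ 2) * (Q / G x) ≤ deriv (riccatiVar B G ψ w) x := by
  have hK : HasDerivAt (riccatiVar B G ψ w) _ x :=
    hB.sub ((hG.mul (h.hasDerivAt x hx)).div (h.hasDerivAt_flux x hx) hw)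
  refine ⟨hK.differentiableAt, ?_⟩
  have hp : p x ≠ 0 := left_ne_zero_of_mul (hGsq ▸ (pow_pos hGpos 2).ne')
  have hGp : G x / p x = Q / G x := by
    rw [div_eq_div_iff hp hGpos.ne', ← sq, hGsq, mul_comm]
  rw [hK.deriv, ← sub_nonneg]
  have hnonneg : 0 ≤ (B' + Q / G x * B x ^ 2) + (Q - q x) * G x * (ψ x / w x) ^ 2 :=
    add_nonneg hB' (mul_nonneg (mul_nonneg (sub_nonneg.2 hq) hGpos.le) (sq_nonneg _))
  refine hnonneg.trans_eq ?_
  have hGw : G x * (w x / p x) = Q / G x * w x := by rw [← hGp]; ring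
  simp only [riccatiVar, Pi.mul_apply, hGw]
  field_simp
  ring

lemma tendsto_riccatiVar_atBot {B G ψ w : ℝ → ℝ} {z R : ℝ} (hzR : z < R)
    (hB : ContinuousAt B R) (hG : ContinuousAt G R) (hψ : ContinuousAt ψ R)
    (hw : ContinuousAt w R) (hGψ : 0 < G R * ψ R) (hwR : w R = 0)
    (hwpos : ∀ x ∈ Ico z R, 0 < w x) :
    Tendsto (riccatiVar B G ψ w) (𝓝[<] R) atBot := by
  have hw0 : Tendsto w (𝓝[<] R) (𝓝[>] 0) := by
    refine tendsto_nhdsWithin_iff.2 ⟨hwR ▸ hw.mono_left nhdsWithin_le_nhds, ?_⟩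
    filter_upwards [Ico_mem_nhdsLT hzR] using hwpos
  have hquot : Tendsto (fun x ↦ G x * ψ x / w x) (𝓝[<] R) atTop :=
    ((hG.mul hψ).tendsto.mono_left nhdsWithin_le_nhds).pos_mul_atTop hGψ
      hw0.inv_tendsto_nhdsGT_zero
  exact (hB.tendsto.mono_left nhdsWithin_le_nhds).add_atBot (tendsto_neg_atTop_atBot.comp hquot)

lemma monotoneOn_arctan_add_of_riccati {K σ : ℝ → ℝ} {s : Set ℝ} (hs : Convex ℝ s)
    (hK : ∀ x ∈ s, DifferentiableAt ℝ K x) (hσ : ∀ x ∈ s, DifferentiableAt ℝ σ x)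
    (hric : ∀ x ∈ s, -(1 + K x ^ 2) * deriv σ x ≤ deriv K x) :
    MonotoneOn (fun x ↦ arctan (K x) + σ x) s := by
  have hderiv : ∀ x ∈ s, HasDerivAt (fun x ↦ arctan (K x) + σ x)
      (1 / (1 + K x ^ 2) * deriv K x + deriv σ x) x := fun x hx ↦
    (hK x hx).hasDerivAt.arctan.add (hσ x hx).hasDerivAt
  refine monotoneOn_of_hasDerivWithinAt_nonneg hs
    (fun x hx ↦ (hderiv x hx).continuousAt.continuousWithinAt)
    (fun x hx ↦ (hderiv x (interior_subset hx)).hasDerivWithinAt) fun x hx ↦ ?_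
  have hle : -deriv σ x ≤ 1 / (1 + K x ^ 2) * deriv K x := by
    rw [one_div_mul_eq_div, le_div_iff₀ (by positivity)]
    linarith [hric x (interior_subset hx)]
  linarith

lemma arctan_add_pi_div_two_le {K σ : ℝ → ℝ} {z R : ℝ} (hzR : z < R)
    (hmono : MonotoneOn (fun x ↦ arctan (K x) + σ x) (Ico z R)) (hσ : ContinuousAt σ R)
    (hK : Tendsto K (𝓝[<] R) atBot) : arctan (K z) + π / 2 ≤ σ R - σ z := by
  have hlim : Tendsto (fun x ↦ arctan (K x) + σ x) (𝓝[<] R) (𝓝 (-(π / 2) + σ R)) :=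
    ((tendsto_arctan_atBot.mono_right nhdsWithin_le_nhds).comp hK).add
      (hσ.tendsto.mono_left nhdsWithin_le_nhds)
  have hle : arctan (K z) + σ z ≤ -(π / 2) + σ R := by
    refine ge_of_tendsto hlim ?_
    filter_upwards [Ico_mem_nhdsLT hzR] with x hx
    exact hmono ⟨le_rfl, hzR⟩ hx hx.1
  linarith

lemma forall_pos_or_exists_first_zero {f : ℝ → ℝ} {a b : ℝ} (hf : ContinuousOn f (Ico a b))
    (ha : 0 < f a) :
    (∀ x ∈ Ico a b, 0 < f x) ∨ ∃ r ∈ Ioo a b, f r = 0 ∧ ∀ x ∈ Ico a r, 0 < f x := by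
  refine or_iff_not_imp_left.2 fun hneg ↦ ?_
  push Not at hneg
  obtain ⟨t, ht, hft⟩ := hneg
  have hsub : Icc a t ⊆ Ico a b := fun y hy ↦ ⟨hy.1, hy.2.trans_lt ht.2⟩
  have hcompact : IsCompact (Icc a t ∩ f ⁻¹' Iic 0) :=
    isCompact_Icc.of_isClosed_subset
      ((hf.mono hsub).preimage_isClosed_of_isClosed isClosed_Icc isClosed_Iic) inter_subset_left
  obtain ⟨r, ⟨hr, hfr⟩, hleast⟩ := hcompact.exists_isLeast ⟨t, ⟨ht.1, le_rfl⟩, hft⟩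
  obtain ⟨y, hy, hfy⟩ : (0 : ℝ) ∈ f '' Icc a r :=
    intermediate_value_Icc' hr.1 (hf.mono ((Icc_subset_Icc_right hr.2).trans hsub)) ⟨hfr, ha.le⟩
  have hyr : y = r := hy.2.antisymm (hleast ⟨⟨hy.1, hy.2.trans hr.2⟩, hfy.le⟩)
  have hfr0 : f r = 0 := hyr ▸ hfy
  have har : a < r := hr.1.lt_of_ne fun heq ↦ ha.ne' (heq ▸ hfr0)
  refine ⟨r, ⟨har, hr.2.trans_lt ht.2⟩, hfr0, fun x hx ↦ lt_of_not_ge fun hfx ↦ ?_⟩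
  exact hx.2.not_ge (hleast ⟨⟨hx.1, hx.2.le.trans hr.2⟩, hfx⟩)

/-- Otherwise `f'` would be integrable, being nonnegative, and yet dominate `δ / (b - x)`. -/
lemma exists_deriv_mul_sub_lt {f f' : ℝ → ℝ} {a b δ : ℝ} (hab : a < b) (hδ : 0 < δ)
    (hf : ContinuousOn f (Icc a b)) (hf' : ∀ x ∈ Ioo a b, HasDerivAt f (f' x) x) :
    ∃ x ∈ Ioo a b, f' x * (b - x) < δ := by
  by_contra! hlarge
  have hge : ∀ x ∈ Ioo a b, δ * (b - x)⁻¹ ≤ f' x := fun x hx ↦ by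
    rw [← div_eq_mul_inv, div_le_iff₀ (sub_pos.2 hx.2)]
    exact hlarge x hx
  have hint : MeasureTheory.IntegrableOn (fun x ↦ δ⁻¹ * f' x) (Ioo a b) :=
    ((intervalIntegral.integrableOn_deriv_of_nonneg hf hf' fun x hx ↦
      (mul_nonneg hδ.le (inv_nonneg.2 (sub_pos.2 hx.2).le)).trans (hge x hx)).mono_set
        Ioo_subset_Ioc_self).const_mul _
  have hinv : IntervalIntegrable (fun x ↦ (x - b)⁻¹) MeasureTheory.volume a b := by
    rw [intervalIntegrable_iff_integrableOn_Ioo_of_le hab.le]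
    refine hint.mono' (by fun_prop) ?_
    filter_upwards [MeasureTheory.ae_restrict_mem measurableSet_Ioo] with x hx
    rw [norm_inv, norm_sub_rev, Real.norm_of_nonneg (sub_pos.2 hx.2).le, le_inv_mul_iff₀ hδ]
    exact hge x hx
  rcases intervalIntegrable_sub_inv_iff.1 hinv with heq | hmem
  · exact hab.ne heq
  · exact hmem right_mem_uIcc

lemma card_mul_le_of_separated {ι α : Type*} [LinearOrder ι] [Preorder α] {σ : α → ℝ}
    (hσ : Monotone σ) {L R : ι → α} {a b : α} {δ : ℝ} (hab : a ≤ b) (S : Finset ι)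
    (hL : ∀ i ∈ S, a ≤ L i) (hR : ∀ i ∈ S, R i ≤ b)
    (hsep : ∀ i ∈ S, ∀ j ∈ S, i < j → R i ≤ L j) (hgap : ∀ i ∈ S, δ ≤ σ (R i) - σ (L i)) :
    S.card * δ ≤ σ b - σ a := by
  induction S using Finset.induction_on_max generalizing b with
  | empty => simpa using hσ hab
  | insert i S hmax ih =>
    have hiS : i ∉ S := fun hmem ↦ lt_irrefl _ (hmax i hmem)
    have hi : i ∈ insert i S := Finset.mem_insert_self i S
    have hsub : ∀ j ∈ S, j ∈ insert i S := fun j ↦ Finset.mem_insert_of_mem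
    have hleft : S.card * δ ≤ σ (L i) - σ a :=
      ih (hL i hi) (fun j hj ↦ hL j (hsub j hj))
        (fun j hj ↦ hsep j (hsub j hj) i hi (hmax j hj))
        (fun j hj k hk ↦ hsep j (hsub j hj) k (hsub k hk)) fun j hj ↦ hgap j (hsub j hj)
    have hright : σ (R i) ≤ σ b := hσ (hR i hi)
    rw [Finset.card_insert_of_notMem hiS]
    push_cast
    linarith [hgap i hi]

/-- Solutions of the spheroidal wave equation `((1 - x²) ψ')' + (χ - c² x²) ψ = 0` on `(-1, 1)`,
with flux `w = (1 - x²) ψ'`. -/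
abbrev IsSpheroidalSol (c χ : ℝ) (ψ w : ℝ → ℝ) : Prop :=
  IsSturmLiouvilleSol (fun x ↦ 1 - x ^ 2) (fun x ↦ χ - c ^ 2 * x ^ 2) (-1) 1 ψ w

namespace Spheroidal

/-- The potential `Q = c² (1 - x²) + D`, an upper bound for `χ - c² x²` when `χ ≤ c² + D`. -/
def majorant (c D x : ℝ) : ℝ := c ^ 2 * (1 - x ^ 2) + D

/-- The weight `G = √((1 - x²) Q)`, the leading coefficient of the majorant equation in the phase
variable `ds = (Q / G) dx`. -/
noncomputable def weight (c D x : ℝ) : ℝ := √((1 - x ^ 2) * majorant c D x)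

/-- The drift `B = -G' / (2 Q)`, which is minus half the logarithmic derivative of the weight `G`
with respect to the phase. -/
noncomputable def drift (c D x : ℝ) : ℝ :=
  x * (2 * (c ^ 2 * (1 - x ^ 2)) + D) / (2 * majorant c D x * weight c D x)

/-- A primitive of `c + √D / √(1 - x²)`, which bounds the phase density
`Q / G = √(c² + D / (1 - x²))` from above. -/
noncomputable def phaseBound (c D x : ℝ) : ℝ := c * x + √D * arcsin x

variable {c D χ x z : ℝ} {ψ w : ℝ → ℝ}

lemma one_sub_sq_pos (hx : x ∈ Ioo (-1 : ℝ) 1) : 0 < 1 - x ^ 2 :=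
  sub_pos.2 ((sq_lt_one_iff_abs_lt_one x).2 (abs_lt.2 hx))

lemma hasDerivAt_one_sub_sq (x : ℝ) : HasDerivAt (fun x : ℝ ↦ 1 - x ^ 2) (-(2 * x)) x :=
  ((hasDerivAt_pow 2 x).const_sub 1).congr_deriv (by norm_num)

lemma hasDerivAt_majorant (c D x : ℝ) :
    HasDerivAt (majorant c D) (c ^ 2 * -(2 * x)) x :=
  ((hasDerivAt_one_sub_sq x).const_mul (c ^ 2)).add_const D

lemma majorant_pos (hD : 0 < D) (hx : x ∈ Ioo (-1 : ℝ) 1) : 0 < majorant c D x :=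
  add_pos_of_nonneg_of_pos (mul_nonneg (sq_nonneg c) (one_sub_sq_pos hx).le) hD

lemma potential_le_majorant (hχ : χ ≤ c ^ 2 + D) (x : ℝ) :
    χ - c ^ 2 * x ^ 2 ≤ majorant c D x := by
  rw [majorant]
  linarith

lemma weight_pos (hD : 0 < D) (hx : x ∈ Ioo (-1 : ℝ) 1) : 0 < weight c D x :=
  sqrt_pos.2 (mul_pos (one_sub_sq_pos hx) (majorant_pos hD hx))

lemma weight_sq (hD : 0 < D) (hx : x ∈ Ioo (-1 : ℝ) 1) :
    weight c D x ^ 2 = (1 - x ^ 2) * majorant c D x :=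
  sq_sqrt (mul_pos (one_sub_sq_pos hx) (majorant_pos hD hx)).le

lemma hasDerivAt_weight (hD : 0 < D) (hx : x ∈ Ioo (-1 : ℝ) 1) :
    HasDerivAt (weight c D) (-2 * majorant c D x * drift c D x) x := by
  have hQ : 0 < majorant c D x := majorant_pos hD hx
  have hG : 0 < weight c D x := weight_pos hD hx
  refine (((hasDerivAt_one_sub_sq x).mul (hasDerivAt_majorant c D x)).sqrt
    (mul_pos (one_sub_sq_pos hx) hQ).ne').congr_deriv ?_
  change _ / (2 * weight c D x) = _
  rw [drift]
  field_simp
  rw [majorant]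
  ring

lemma hasDerivAt_drift (hD : 0 < D) (hx : x ∈ Ioo (-1 : ℝ) 1) :
    HasDerivAt (drift c D)
      (((1 - x ^ 2) * majorant c D x * (2 * (c ^ 2 * (1 - x ^ 2)) + D) +
        x ^ 2 * (4 * (c ^ 2 * (1 - x ^ 2)) ^ 2 + 2 * (c ^ 2 * (1 - x ^ 2)) * D + D ^ 2)) /
        (2 * majorant c D x * weight c D x ^ 3)) x := by
  have hQ : 0 < majorant c D x := majorant_pos hD hx
  have hG : 0 < weight c D x := weight_pos hD hx
  have hnum := (hasDerivAt_id x).mul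
    ((((hasDerivAt_one_sub_sq x).const_mul (c ^ 2)).const_mul 2).add_const D)
  have hden := ((hasDerivAt_majorant c D x).const_mul 2).mul (hasDerivAt_weight (c := c) hD hx)
  refine (hnum.div hden (mul_pos (mul_pos two_pos hQ) hG).ne').congr_deriv ?_
  simp only [Pi.mul_apply, id]
  rw [drift]
  field_simp
  simp only [weight_sq hD hx, majorant]
  ring

lemma drift_neg (c D x : ℝ) : drift c D (-x) = -drift c D x := by
  simp only [drift, weight, majorant, neg_sq]
  ring

lemma drift_le_div_weight (hD : 0 < D) (hx : x ∈ Ioo (-1 : ℝ) 1) (hx0 : 0 ≤ x) :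
    drift c D x ≤ x / weight c D x := by
  have hQ : 0 < majorant c D x := majorant_pos hD hx
  have hG : 0 < weight c D x := weight_pos hD hx
  rw [drift, ← div_div]
  gcongr
  rw [div_le_iff₀ (by positivity)]
  gcongr
  rw [majorant]
  linarith

lemma hasDerivAt_phaseBound (hx : x ∈ Ioo (-1 : ℝ) 1) :
    HasDerivAt (phaseBound c D) (c + √D / √(1 - x ^ 2)) x :=
  (((hasDerivAt_id x).const_mul c).add
    ((hasDerivAt_arcsin hx.1.ne' hx.2.ne).const_mul √D)).congr_deriv (by ring)

lemma continuous_phaseBound (c D : ℝ) : Continuous (phaseBound c D) := by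
  unfold phaseBound
  fun_prop

lemma monotone_phaseBound (hc : 0 ≤ c) : Monotone (phaseBound c D) :=
  (monotone_id.const_mul hc).add (monotone_arcsin.const_mul (sqrt_nonneg D))

lemma phaseBound_neg (c D x : ℝ) : phaseBound c D (-x) = -phaseBound c D x := by
  rw [phaseBound, phaseBound, arcsin_neg]
  ring

lemma majorant_div_weight_le (hc : 0 ≤ c) (hD : 0 < D) (hx : x ∈ Ioo (-1 : ℝ) 1) :
    majorant c D x / weight c D x ≤ c + √D / √(1 - x ^ 2) := by
  have hp : 0 < 1 - x ^ 2 := one_sub_sq_pos hx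
  have hQ : 0 < majorant c D x := majorant_pos hD hx
  refine le_of_sq_le_sq ?_ (by positivity)
  calc (majorant c D x / weight c D x) ^ 2 = c ^ 2 + D / (1 - x ^ 2) := by
        rw [div_pow, weight_sq hD hx, sq (majorant c D x), mul_div_mul_right _ _ hQ.ne', majorant,
          add_div, mul_div_cancel_right₀ _ hp.ne']
    _ = c ^ 2 + (√D / √(1 - x ^ 2)) ^ 2 := by rw [div_pow, sq_sqrt hD.le, sq_sqrt hp.le]
    _ ≤ (c + √D / √(1 - x ^ 2)) ^ 2 := by
        rw [add_sq]
        linarith [show 0 ≤ 2 * c * (√D / √(1 - x ^ 2)) by positivity]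

lemma monotoneOn_arctan_riccatiVar_add_phaseBound (h : IsSpheroidalSol c χ ψ w) (hc : 0 ≤ c)
    (hD : 0 < D) (hχ : χ ≤ c ^ 2 + D) {s : Set ℝ} (hs : Convex ℝ s) (hsub : s ⊆ Ioo (-1) 1)
    (hw : ∀ x ∈ s, w x ≠ 0) :
    MonotoneOn
      (fun x ↦ arctan (riccatiVar (drift c D) (weight c D) ψ w x) + phaseBound c D x) s := by
  have hric : ∀ x ∈ s,
      DifferentiableAt ℝ (riccatiVar (drift c D) (weight c D) ψ w) x ∧
        -(1 + riccatiVar (drift c D) (weight c D) ψ w x ^ 2) *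
          (majorant c D x / weight c D x) ≤
            deriv (riccatiVar (drift c D) (weight c D) ψ w) x := fun x hx ↦ by
    have hp : 0 < 1 - x ^ 2 := one_sub_sq_pos (hsub hx)
    have hQ : 0 < majorant c D x := majorant_pos hD (hsub hx)
    have hG : 0 < weight c D x := weight_pos hD (hsub hx)
    exact h.riccatiVar_deriv_ge (hsub hx) (hw x hx) (hasDerivAt_weight hD (hsub hx))
      (hasDerivAt_drift hD (hsub hx)) hG (weight_sq hD (hsub hx)) (by positivity)
      (potential_le_majorant hχ x)
  refine monotoneOn_arctan_add_of_riccati hs (fun x hx ↦ (hric x hx).1)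
    (fun x hx ↦ (hasDerivAt_phaseBound (hsub hx)).differentiableAt) fun x hx ↦ ?_
  rw [(hasDerivAt_phaseBound (hsub hx)).deriv]
  refine le_trans ?_ (hric x hx).2
  rw [neg_mul, neg_mul, neg_le_neg_iff]
  have hle := majorant_div_weight_le hc hD (hsub hx)
  gcongr

/-- A flux bounded away from `0` would make `ψ'` grow like `1 / (1 - x)`. -/
lemma exists_flux_lt (h : IsSpheroidalSol c χ ψ w) (hx : x ∈ Ioo (-1 : ℝ) 1) {ε : ℝ}
    (hε : 0 < ε) : ∃ y ∈ Ico x 1, w y < ε := by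
  obtain ⟨y, hy, hlt⟩ := exists_deriv_mul_sub_lt hx.2 (half_pos hε)
    (h.continuousOn.mono (Icc_subset_Icc_left hx.1.le))
    fun y hy ↦ h.hasDerivAt y (Ioo_subset_Ioo_left hx.1.le hy)
  refine ⟨y, Ioo_subset_Ico_self hy, ?_⟩
  have hy₁ : 0 < 1 - y := sub_pos.2 hy.2
  have hy₂ : 0 < 1 + y := by linarith [hx.1, hy.1]
  have hdiv : w y / (1 - y ^ 2) * (1 - y) = w y / (1 + y) := by
    rw [show 1 - y ^ 2 = (1 - y) * (1 + y) by ring]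
    field_simp
  rw [hdiv, div_lt_iff₀ hy₂] at hlt
  nlinarith

lemma flux_le_majorant_mul (h : IsSpheroidalSol c χ ψ w) (hD : 0 < D) (hχ : χ ≤ c ^ 2 + D)
    (hx0 : 0 ≤ x) (hx1 : x < 1) (hψ : ∀ y ∈ Ico x 1, ψ y ∈ Icc 0 (ψ 1)) :
    w x ≤ majorant c D x * ψ 1 * (1 - x) := by
  have hx : x ∈ Ioo (-1 : ℝ) 1 := ⟨neg_one_lt_zero.trans_le hx0, hx1⟩
  refine h.flux_le_of_exists_lt hx.1 hψ (majorant_pos hD hx).le (fun y hy ↦ ?_)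
    fun ε hε ↦ exists_flux_lt h hx hε
  calc χ - c ^ 2 * y ^ 2 ≤ χ - c ^ 2 * x ^ 2 := by
        have hxy : x ≤ y := hy.1
        gcongr
    _ ≤ majorant c D x := potential_le_majorant hχ x

lemma riccatiVar_le_of_flux_le (hD : 0 < D) (hx0 : 0 ≤ x) (hx1 : x < 1) (hwx : 0 < w x)
    (hψx : 0 ≤ ψ x) (hψ1 : 0 < ψ 1) (hflux : w x ≤ majorant c D x * ψ 1 * (1 - x)) :
    riccatiVar (drift c D) (weight c D) ψ w x ≤
      (x - (1 + x) * (ψ x / ψ 1)) * (weight c D x)⁻¹ := by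
  have hx : x ∈ Ioo (-1 : ℝ) 1 := ⟨neg_one_lt_zero.trans_le hx0, hx1⟩
  have hG : 0 < weight c D x := weight_pos hD hx
  have hquot : (1 + x) * (ψ x / ψ 1) / weight c D x ≤ weight c D x * ψ x / w x := by
    rw [← mul_div_assoc, div_div, div_le_div_iff₀ (by positivity) hwx]
    calc (1 + x) * ψ x * w x
        ≤ (1 + x) * ψ x * (majorant c D x * ψ 1 * (1 - x)) := by gcongr
      _ = (1 - x ^ 2) * majorant c D x * ψ x * ψ 1 := by ring
      _ = weight c D x * ψ x * (ψ 1 * weight c D x) := by rw [← weight_sq hD hx]; ring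
  rw [riccatiVar, ← div_eq_mul_inv, sub_div]
  exact sub_le_sub (drift_le_div_weight hD hx hx0) hquot

lemma tendsto_inv_weight_atTop (c : ℝ) (hD : 0 < D) :
    Tendsto (fun x ↦ (weight c D x)⁻¹) (𝓝[<] 1) atTop := by
  have hcont : Continuous (weight c D) := by
    unfold weight majorant
    fun_prop
  have hone : weight c D 1 = 0 := by simp [weight]
  refine Tendsto.inv_tendsto_nhdsGT_zero (tendsto_nhdsWithin_iff.2
    ⟨hone ▸ hcont.continuousAt.tendsto.mono_left nhdsWithin_le_nhds, ?_⟩)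
  filter_upwards [Ioo_mem_nhdsLT (neg_lt_self one_pos)] with x hx using weight_pos hD hx

lemma tendsto_riccatiVar_atBot_one (h : IsSpheroidalSol c χ ψ w) (hD : 0 < D)
    (hχ : χ ≤ c ^ 2 + D) (hz : z ∈ Ioo (-1 : ℝ) 1) (hψz : ψ z = 0)
    (hw : ∀ x ∈ Ico z 1, 0 < w x) :
    Tendsto (riccatiVar (drift c D) (weight c D) ψ w) (𝓝[<] 1) atBot := by
  have hmono : StrictMonoOn ψ (Icc z 1) :=
    h.strictMonoOn_of_flux_pos (fun _ ↦ one_sub_sq_pos) hz.1.le le_rfl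
      fun x hx ↦ hw x (Ioo_subset_Ico_self hx)
  have hψmem : ∀ y ∈ Icc z 1, ψ y ∈ Icc 0 (ψ 1) := fun y hy ↦
    ⟨hψz ▸ hmono.monotoneOn (left_mem_Icc.2 hz.2.le) hy hy.1,
      hmono.monotoneOn hy (right_mem_Icc.2 hz.2.le) hy.2⟩
  have hψ1 : 0 < ψ 1 :=
    hψz ▸ hmono (left_mem_Icc.2 hz.2.le) (right_mem_Icc.2 hz.2.le) hz.2
  have hψlim : Tendsto ψ (𝓝[<] 1) (𝓝 (ψ 1)) := by
    rw [← nhdsWithin_Ico_eq_nhdsLT (neg_lt_self (one_pos (α := ℝ)))]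
    exact (h.continuousOn 1 (by simp)).mono Ico_subset_Icc_self
  have hid : Tendsto (fun x : ℝ ↦ x) (𝓝[<] 1) (𝓝 1) := nhdsWithin_le_nhds
  have hlim : Tendsto (fun x ↦ x - (1 + x) * (ψ x / ψ 1)) (𝓝[<] 1) (𝓝 (-1)) := by
    convert hid.sub ((hid.const_add 1).mul (hψlim.div_const (ψ 1))) using 2
    rw [div_self hψ1.ne']
    norm_num
  refine tendsto_atBot_mono' _ ?_
    (hlim.neg_mul_atTop neg_one_lt_zero (tendsto_inv_weight_atTop c hD))
  filter_upwards [Ioo_mem_nhdsLT (max_lt hz.2 one_pos)] with x hx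
  obtain ⟨hzx, hx0⟩ := max_lt_iff.1 hx.1
  have hflux := flux_le_majorant_mul h hD hχ hx0.le hx.2
    fun y hy ↦ hψmem y ⟨hzx.le.trans hy.1, hy.2.le⟩
  exact riccatiVar_le_of_flux_le hD hx0.le hx.2 (hw x ⟨hzx.le, hx.2⟩)
    (hψmem x ⟨hzx.le, hx.2.le⟩).1 hψ1 hflux

lemma exists_right_flux_zero (h : IsSpheroidalSol c χ ψ w) (hc : 0 ≤ c) (hD : 0 < D)
    (hχ : χ ≤ c ^ 2 + D) (hz : z ∈ Ioo (-1 : ℝ) 1) (hψz : ψ z = 0) (hwz : 0 < w z) :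
    ∃ R ∈ Ioc z 1, (∀ x ∈ Ico z R, 0 < w x) ∧
      arctan (drift c D z) + π / 2 ≤ phaseBound c D R - phaseBound c D z := by
  obtain ⟨R, hR, hwpos, hK⟩ : ∃ R ∈ Ioc z 1, (∀ x ∈ Ico z R, 0 < w x) ∧
      Tendsto (riccatiVar (drift c D) (weight c D) ψ w) (𝓝[<] R) atBot := by
    rcases forall_pos_or_exists_first_zero
      (h.continuousOn_flux.mono fun x hx ↦ ⟨hz.1.trans_le hx.1, hx.2⟩) hwz with
      hwpos | ⟨R, hR, hwR, hwpos⟩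
    · exact ⟨1, ⟨hz.2, le_rfl⟩, hwpos, tendsto_riccatiVar_atBot_one h hD hχ hz hψz hwpos⟩
    · have hRmem : R ∈ Ioo (-1 : ℝ) 1 := ⟨hz.1.trans hR.1, hR.2⟩
      have hψR : 0 < ψ R := hψz ▸ h.strictMonoOn_of_flux_pos (fun _ ↦ one_sub_sq_pos) hz.1.le
        hR.2.le (fun x hx ↦ hwpos x (Ioo_subset_Ico_self hx)) (left_mem_Icc.2 hR.1.le)
        (right_mem_Icc.2 hR.1.le) hR.1
      exact ⟨R, Ioo_subset_Ioc_self hR, hwpos, tendsto_riccatiVar_atBot hR.1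
        (hasDerivAt_drift hD hRmem).continuousAt (hasDerivAt_weight hD hRmem).continuousAt
        (h.hasDerivAt R hRmem).continuousAt (h.hasDerivAt_flux R hRmem).continuousAt
        (mul_pos (weight_pos hD hRmem) hψR) hwR hwpos⟩
  have hmono := monotoneOn_arctan_riccatiVar_add_phaseBound h hc hD hχ (convex_Ico z R)
    (fun x hx ↦ ⟨hz.1.trans_le hx.1, hx.2.trans_le hR.2⟩) fun x hx ↦ (hwpos x hx).ne'
  refine ⟨R, hR, hwpos, ?_⟩
  simpa [riccatiVar, hψz] using
    arctan_add_pi_div_two_le hR.1 hmono (continuous_phaseBound c D).continuousAt hK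

/-- The boundary terms `arctan (drift c D z)` of the two halves cancel because the drift is odd. -/
lemma exists_flux_nodal_interval_of_pos (h : IsSpheroidalSol c χ ψ w) (hc : 0 ≤ c) (hD : 0 < D)
    (hχ : χ ≤ c ^ 2 + D) (hz : z ∈ Ioo (-1 : ℝ) 1) (hψz : ψ z = 0) (hwz : 0 < w z) :
    ∃ L ∈ Ico (-1) z, ∃ R ∈ Ioc z 1, (∀ x ∈ Ioo L R, w x ≠ 0) ∧
      π ≤ phaseBound c D R - phaseBound c D L := by
  have hrefl : IsSpheroidalSol c χ (fun x ↦ -ψ (-x)) (fun x ↦ w (-x)) := by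
    convert h.comp_neg.neg using 1 <;> simp [funext_iff]
  have hz' : -z ∈ Ioo (-1 : ℝ) 1 := ⟨neg_lt_neg hz.2, neg_lt.1 hz.1⟩
  obtain ⟨R, hR, hwR, hphaseR⟩ := exists_right_flux_zero h hc hD hχ hz hψz hwz
  obtain ⟨L, hL, hwL, hphaseL⟩ :=
    exists_right_flux_zero hrefl hc hD hχ hz' (by simp [hψz]) (by simpa using hwz)
  refine ⟨-L, ⟨neg_le_neg hL.2, neg_lt.1 hL.1⟩, R, hR, fun x hx ↦ ?_, ?_⟩
  · rcases le_total z x with hzx | hxz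
    · exact (hwR x ⟨hzx, hx.2⟩).ne'
    · simpa using (hwL (-x) ⟨neg_le_neg hxz, neg_lt.1 hx.1⟩).ne'
  · rw [drift_neg, arctan_neg, phaseBound_neg] at hphaseL
    rw [phaseBound_neg]
    linarith

lemma exists_flux_nodal_interval (h : IsSpheroidalSol c χ ψ w) (hc : 0 ≤ c) (hD : 0 < D)
    (hχ : χ ≤ c ^ 2 + D) (hz : z ∈ Ioo (-1 : ℝ) 1) (hψz : ψ z = 0) (hwz : w z ≠ 0) :
    ∃ L ∈ Ico (-1) z, ∃ R ∈ Ioc z 1, (∀ x ∈ Ioo L R, w x ≠ 0) ∧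
      π ≤ phaseBound c D R - phaseBound c D L := by
  rcases hwz.lt_or_gt with hneg | hpos
  · simpa using exists_flux_nodal_interval_of_pos h.neg hc hD hχ hz (by simp [hψz])
      (by simpa using hneg)
  · exact exists_flux_nodal_interval_of_pos h hc hD hχ hz hψz hpos

theorem ncard_zeros_mul_pi_le (h : IsSpheroidalSol c χ ψ w) (hc : 0 ≤ c) (hD : 0 < D)
    (hχ : χ ≤ c ^ 2 + D) (hfin : {x | x ∈ Ioo (-1 : ℝ) 1 ∧ ψ x = 0}.Finite) :
    {x | x ∈ Ioo (-1 : ℝ) 1 ∧ ψ x = 0}.ncard * π ≤ 2 * c + √D * π := by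
  have hp : ∀ x ∈ Ioo (-1 : ℝ) 1, 1 - x ^ 2 ≠ 0 := fun x hx ↦ (one_sub_sq_pos hx).ne'
  have hnodal : ∀ z ∈ {x | x ∈ Ioo (-1 : ℝ) 1 ∧ ψ x = 0},
      ∃ L ∈ Ico (-1) z, ∃ R ∈ Ioc z 1, (∀ x ∈ Ioo L R, w x ≠ 0) ∧
        π ≤ phaseBound c D R - phaseBound c D L := fun z hz ↦
    exists_flux_nodal_interval h hc hD hχ hz.1 hz.2
      (h.flux_ne_zero_of_finite_zeros (by fun_prop) hp (by fun_prop) hfin hz.1 hz.2)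
  choose! L hL R hR hw hphase using hnodal
  have hsep : ∀ y ∈ {x | x ∈ Ioo (-1 : ℝ) 1 ∧ ψ x = 0},
      ∀ z ∈ {x | x ∈ Ioo (-1 : ℝ) 1 ∧ ψ x = 0}, y < z → R y ≤ L z := fun y hy z hz hyz ↦ by
    obtain ⟨ξ, hξ, hwξ⟩ :=
      h.exists_flux_eq_zero hp hy.1.1.le hyz hz.1.2.le (hy.2.trans hz.2.symm)
    have hRξ : R y ≤ ξ := le_of_not_gt fun hlt ↦ hw y hy ξ ⟨(hL y hy).2.trans hξ.1, hlt⟩ hwξ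
    have hξL : ξ ≤ L z := le_of_not_gt fun hlt ↦ hw z hz ξ ⟨hlt, hξ.2.trans (hR z hz).1⟩ hwξ
    exact hRξ.trans hξL
  have hcard := card_mul_le_of_separated (monotone_phaseBound (D := D) hc) (L := L) (R := R)
    (neg_le_self zero_le_one) hfin.toFinset
    (fun z hz ↦ (hL z (hfin.mem_toFinset.1 hz)).1) (fun z hz ↦ (hR z (hfin.mem_toFinset.1 hz)).2)
    (fun y hy z hz ↦ hsep y (hfin.mem_toFinset.1 hy) z (hfin.mem_toFinset.1 hz))
    (fun z hz ↦ hphase z (hfin.mem_toFinset.1 hz))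
  rw [ncard_eq_toFinset_card _ hfin]
  refine hcard.trans_eq ?_
  rw [phaseBound_neg, phaseBound, arcsin_one]
  ring

end Spheroidal

lemma IsPSWF.isSpheroidalSol {c χ : ℝ} {n : ℕ} {ψ : ℝ → ℝ} {lam : ℂ} (h : IsPSWF c n ψ χ lam) :
    IsSpheroidalSol c χ ψ (fun x ↦ (1 - x ^ 2) * deriv ψ x) := by
  obtain ⟨hcont, hdiff, hode, -⟩ := h
  refine ⟨hcont, fun x hx ↦ ?_, fun x hx ↦ ?_⟩
  · exact (hdiff x hx).1.hasDerivAt.congr_deriv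
      (mul_div_cancel_left₀ _ (Spheroidal.one_sub_sq_pos hx).ne').symm
  · refine ((Spheroidal.hasDerivAt_one_sub_sq x).mul
      (hdiff x hx).2.hasDerivAt).congr_deriv ?_
    linarith [hode x hx]

lemma IsPSWF.nat_le_of_eigenvalue_le {c D χ : ℝ} {n : ℕ} {ψ : ℝ → ℝ} {lam : ℂ}
    (h : IsPSWF c n ψ χ lam) (hc : 0 ≤ c) (hD : 0 < D) (hχ : χ ≤ c ^ 2 + D) :
    n ≤ 2 * c / π + √D := by
  have hsol := h.isSpheroidalSol
  obtain ⟨-, -, -, hfin, hncard, -⟩ := h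
  have hcount := Spheroidal.ncard_zeros_mul_pi_le hsol hc hD hχ hfin
  rwa [hncard, ← le_div_iff₀ pi_pos, add_div, mul_div_cancel_right₀ _ pi_ne_zero] at hcount

lemma IsPSWF.sq_add_lt_eigenvalue {c D χ : ℝ} {n : ℕ} {ψ : ℝ → ℝ} {lam : ℂ}
    (h : IsPSWF c n ψ χ lam) (hc : 0 ≤ c) (hD : 0 ≤ D) (hn : 2 * c / π + √D < n) :
    c ^ 2 + D < χ := by
  obtain ⟨t, hDt, htn⟩ := exists_between (lt_sub_iff_add_lt'.2 hn)
  have ht : 0 < t := (sqrt_nonneg D).trans_lt hDt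
  have hχ : c ^ 2 + t ^ 2 < χ := lt_of_not_ge fun hχ ↦ by
    have hle := h.nat_le_of_eigenvalue_le hc (pow_pos ht 2) hχ
    rw [sqrt_sq ht.le] at hle
    linarith
  linarith [(sqrt_lt hD ht.le).1 hDt]

theorem stmt5_general {c D χ : ℝ} {n : ℕ} {ψ : ℝ → ℝ} {lam : ℂ} (hc : 0 ≤ c) (hD : 0 ≤ D)
    (hn : 2 * c / π + √D < n) (h : IsPSWF c n ψ χ lam) :
    c ^ 2 + D < χ ∧
      ∀ k₀ : ℕ,
        IsGreatest {k : ℕ | 1 ≤ k ∧ 2 * (k : ℝ) * (2 * (k : ℝ) + 1) < χ - c ^ 2} k₀ →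
        ∀ m : ℕ, 1 ≤ m → 2 * (m : ℝ) * (2 * (m : ℝ) + 1) ≤ D → m ≤ k₀ :=
  have hχ : c ^ 2 + D < χ := h.sq_add_lt_eigenvalue hc hD hn
  ⟨hχ, fun _ hk₀ _ hm hmD ↦ hk₀.2 ⟨hm, hmD.trans_lt (lt_sub_iff_add_lt'.2 hχ)⟩⟩

theorem stmt5 (c : ℝ) (hc : 0 < c) (n : ℕ) (hn : 0 < n)
    (hnlow : (n : ℝ) > 2 * c / π + Real.sqrt 42)
    (ψ : ℝ → ℝ) (χ : ℝ) (lam : ℂ)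
    (hpswf : IsPSWF c n ψ χ lam) :
    χ > c ^ 2 + 42 ∧
      ∀ k₀ : ℕ,
        IsGreatest {k : ℕ | 1 ≤ k ∧ 2 * (k : ℝ) * (2 * (k : ℝ) + 1) < χ - c ^ 2} k₀ →
        2 < k₀ := by
  obtain ⟨hχ, hk⟩ := stmt5_general hc.le (by norm_num) hnlow hpswf
  exact ⟨hχ, fun k₀ hk₀ ↦ hk k₀ hk₀ 3 (by norm_num) (by norm_num)⟩
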